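/- Let A be a partial H-module algebra and N ⊆ A an Hn-system. For every a ∈ N there exists an Hm-system M with a ∈ M ⊆ N. -/

import Mathlib

open TensorProduct

noncomputable section

variable (k : Type*) [Field k]

/-- The "Sweedler sum" `h ↦ Σ f(h₁) * g(h₂)`. -/
def sweedler {H A : Type*} [Ring H] [HopfAlgebra k H]
    [Ring A] [Algebra k A] (f g : H →ₗ[k] A) : H →ₗ[k] A :=
  (LinearMap.mul' k A) ∘ₗ (TensorProduct.map f g) ∘ₗ Coalgebra.comul

/-- A (left) partial `H`-module algebra structure on a unital algebra `A`:
`1_H · a = a`, `h · (ab) = Σ (h₁·a)(h₂·b)` and `h·(g·b) = Σ (h₁·1)((h₂ g)·b)`. -/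
structure PartialModuleAlgebra (H A : Type*) [Ring H] [HopfAlgebra k H]
    [Ring A] [Algebra k A] where
  act : H →ₗ[k] A →ₗ[k] A
  one_act : ∀ a : A, act 1 a = a
  act_mul : ∀ (h : H) (a b : A),
    act h (a * b) = sweedler k (act.flip a) (act.flip b) h
  act_act : ∀ (h g : H) (b : A),
    act h (act g b) =
      sweedler k (act.flip 1) ((act.flip b) ∘ₗ LinearMap.mulRight k g) h

variable {H A : Type*} [Ring H] [HopfAlgebra k H] [Ring A] [Algebra k A]

/-- A (two-sided) ideal of `A`, encoded as a `k`-submodule closed under multiplication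
by elements of `A` on both sides. -/
def IsIdeal (I : Submodule k A) : Prop :=
  ∀ a ∈ I, ∀ b : A, a * b ∈ I ∧ b * a ∈ I

/-- An `H`-stable subspace: `H · I ⊆ I`. -/
def Hstable (ξ : PartialModuleAlgebra k H A) (I : Submodule k A) : Prop :=
  ∀ (h : H), ∀ x ∈ I, ξ.act h x ∈ I

/-- `(I : H) = {x ∈ I | h · x ∈ I for all h ∈ H}`. -/
def colonH (ξ : PartialModuleAlgebra k H A) (I : Submodule k A) : Submodule k A :=
  I ⊓ ⨅ h : H, Submodule.comap (ξ.act h) I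

/-- The product of two ideals of `A`. -/
def idealProd (I J : Submodule k A) : Submodule k A :=
  Submodule.span k {z | ∃ a ∈ I, ∃ b ∈ J, z = a * b}

/-- An `H`-prime ideal: a proper `H`-stable ideal `𝔭` such that for all `H`-stable ideals
`I, J`, `IJ ⊆ 𝔭` implies `I ⊆ 𝔭` or `J ⊆ 𝔭`. -/
def IsHPrime (ξ : PartialModuleAlgebra k H A) (p : Submodule k A) : Prop :=
  IsIdeal k p ∧ Hstable k ξ p ∧ p ≠ ⊤ ∧
    ∀ I J : Submodule k A, IsIdeal k I → Hstable k ξ I → IsIdeal k J → Hstable k ξ J →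
      idealProd k I J ≤ p → I ≤ p ∨ J ≤ p

/-- An `H`-semiprime ideal: a proper `H`-stable ideal `𝔰` such that `I² ⊆ 𝔰` implies
`I ⊆ 𝔰` for every `H`-stable ideal `I`. -/
def IsHSemiprime (ξ : PartialModuleAlgebra k H A) (s : Submodule k A) : Prop :=
  IsIdeal k s ∧ Hstable k ξ s ∧ s ≠ ⊤ ∧
    ∀ I : Submodule k A, IsIdeal k I → Hstable k ξ I → idealProd k I I ≤ s → I ≤ s

/-- The subspace `A(H·x)A(H·y)`, spanned by the products `a (h·x) b (g·y)`. -/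
def spanAxAy (ξ : PartialModuleAlgebra k H A) (x y : A) : Submodule k A :=
  Submodule.span k {w | ∃ (a : A) (h : H) (b : A) (g : H), w = a * ξ.act h x * b * ξ.act g y}

/-- An `Hm`-system: a nonempty `M ⊆ A` such that `A(H·x)A(H·y) ∩ M ≠ ∅` for `x, y ∈ M`. -/
def HmSystem (ξ : PartialModuleAlgebra k H A) (M : Set A) : Prop :=
  M.Nonempty ∧ ∀ x ∈ M, ∀ y ∈ M, ∃ z ∈ M, z ∈ spanAxAy k ξ x y

/-- An `Hn`-system: a nonempty `N ⊆ A` such that `A(H·x)A(H·x) ∩ N ≠ ∅` for `x ∈ N`. -/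
def HnSystem (ξ : PartialModuleAlgebra k H A) (N : Set A) : Prop :=
  N.Nonempty ∧ ∀ x ∈ N, ∃ z ∈ N, z ∈ spanAxAy k ξ x x

/-- The `H`-radical `√_H(I)` of an `H`-stable ideal `I`:
`{x | every Hm-system containing x meets I}`. -/
def Hradical (ξ : PartialModuleAlgebra k H A) (I : Submodule k A) : Set A :=
  {x : A | ∀ M : Set A, HmSystem k ξ M → x ∈ M → (M ∩ (I : Set A)).Nonempty}

/-!
The left ideal `A(H·x)` is stable under `H`, so it contains `A(H·y)` as soon as it contains `y`.
Choosing repeatedly in an `Hn`-system, one gets a sequence with `xₙ₊₁ ∈ A(H·xₙ)A(H·xₙ)`, along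
which the left ideals `A(H·xₙ)` decrease. For `m = max i j` this yields
`xₘ₊₁ ∈ A(H·xₘ)A(H·xₘ) ⊆ A(H·xᵢ)A(H·xⱼ)`, so the terms of the sequence form an `Hm`-system.
-/

theorem sweedler_mem_range_mul_range (f g : H →ₗ[k] A) (h : H) :
    sweedler k f g h ∈ LinearMap.range f * LinearMap.range g := by
  simp only [sweedler, LinearMap.comp_apply]
  induction Coalgebra.comul (R := k) h using TensorProduct.induction_on with
  | zero => simp
  | tmul p q =>
    exact Submodule.mul_mem_mul (LinearMap.mem_range_self f p) (LinearMap.mem_range_self g q)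
  | add s t hs ht => simpa only [map_add] using add_mem hs ht

namespace PartialModuleAlgebra

variable {k} (ξ : PartialModuleAlgebra k H A)

/-- The subspace `H·x` of `A`. It need not be `H`-stable, since the action is only partial. -/
def orbit (x : A) : Submodule k A :=
  LinearMap.range (ξ.act.flip x)

/-- The left ideal `A(H·x)`, the smallest `H`-stable left ideal containing `x`. It is encoded as a
`k`-submodule so that products `A(H·x)A(H·y)` are products of submodules. -/
def orbitLeftIdeal (x : A) : Submodule k A :=
  ⊤ * ξ.orbit x

theorem act_mem_orbit (h : H) (x : A) : ξ.act h x ∈ ξ.orbit x :=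
  LinearMap.mem_range_self (ξ.act.flip x) h

theorem act_mul_mem_orbit_mul_orbit (h : H) (a b : A) :
    ξ.act h (a * b) ∈ ξ.orbit a * ξ.orbit b := by
  rw [ξ.act_mul]
  exact sweedler_mem_range_mul_range k _ _ h

theorem orbit_act_le_orbit_one_mul_orbit (g : H) (x : A) :
    ξ.orbit (ξ.act g x) ≤ ξ.orbit 1 * ξ.orbit x := by
  rintro _ ⟨h, rfl⟩
  rw [LinearMap.flip_apply, ξ.act_act]
  exact mul_le_mul_right (LinearMap.range_comp_le_range _ _) _
    (sweedler_mem_range_mul_range k _ _ h)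

theorem mul_orbitLeftIdeal_le (I : Submodule k A) (x : A) :
    I * ξ.orbitLeftIdeal x ≤ ξ.orbitLeftIdeal x := by
  rw [orbitLeftIdeal, ← mul_assoc]
  exact mul_le_mul_left le_top _

theorem hstable_orbitLeftIdeal (x : A) : Hstable k ξ (ξ.orbitLeftIdeal x) := by
  intro h
  change ξ.orbitLeftIdeal x ≤ (ξ.orbitLeftIdeal x).comap (ξ.act h)
  refine Submodule.mul_le.2 ?_
  rintro a - _ ⟨g, rfl⟩
  have orbit_act_le : ξ.orbit (ξ.act g x) ≤ ξ.orbitLeftIdeal x :=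
    (ξ.orbit_act_le_orbit_one_mul_orbit g x).trans (mul_le_mul_left le_top _)
  exact ξ.mul_orbitLeftIdeal_le (ξ.orbit a) x
    (mul_le_mul_right orbit_act_le _ (ξ.act_mul_mem_orbit_mul_orbit h a _))

theorem orbitLeftIdeal_le_of_mem {x y : A} (hy : y ∈ ξ.orbitLeftIdeal x) :
    ξ.orbitLeftIdeal y ≤ ξ.orbitLeftIdeal x := by
  have orbit_le : ξ.orbit y ≤ ξ.orbitLeftIdeal x := by
    rintro _ ⟨h, rfl⟩
    exact ξ.hstable_orbitLeftIdeal x h y hy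
  exact (mul_le_mul_right orbit_le ⊤).trans (ξ.mul_orbitLeftIdeal_le ⊤ x)

theorem orbitLeftIdeal_eq_span (x : A) :
    ξ.orbitLeftIdeal x = Submodule.span k {w | ∃ (a : A) (h : H), w = a * ξ.act h x} := by
  refine le_antisymm (Submodule.mul_le.2 ?_) (Submodule.span_le.2 ?_)
  · rintro a - _ ⟨h, rfl⟩
    exact Submodule.subset_span ⟨a, h, rfl⟩
  · rintro _ ⟨a, h, rfl⟩
    exact Submodule.mul_mem_mul Submodule.mem_top (ξ.act_mem_orbit h x)

theorem spanAxAy_eq_mul (x y : A) :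
    spanAxAy k ξ x y = ξ.orbitLeftIdeal x * ξ.orbitLeftIdeal y := by
  rw [orbitLeftIdeal_eq_span, orbitLeftIdeal_eq_span, Submodule.span_mul_span, spanAxAy]
  congr 1
  ext w
  constructor
  · rintro ⟨a, h, b, g, rfl⟩
    exact ⟨_, ⟨a, h, rfl⟩, _, ⟨b, g, rfl⟩, (mul_assoc _ _ _).symm⟩
  · rintro ⟨_, ⟨a, h, rfl⟩, _, ⟨b, g, rfl⟩, rfl⟩
    exact ⟨a, h, b, g, (mul_assoc _ _ _).symm⟩

theorem antitone_orbitLeftIdeal {s : ℕ → A}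
    (hs : ∀ n, s (n + 1) ∈ spanAxAy k ξ (s n) (s n)) :
    Antitone fun n => ξ.orbitLeftIdeal (s n) := by
  refine antitone_nat_of_succ_le fun n => ξ.orbitLeftIdeal_le_of_mem ?_
  have hsn := hs n
  rw [spanAxAy_eq_mul] at hsn
  exact ξ.mul_orbitLeftIdeal_le _ _ hsn

theorem hmSystem_range {s : ℕ → A} (hs : ∀ n, s (n + 1) ∈ spanAxAy k ξ (s n) (s n)) :
    HmSystem k ξ (Set.range s) := by
  refine ⟨Set.range_nonempty s, ?_⟩
  rintro _ ⟨i, rfl⟩ _ ⟨j, rfl⟩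
  refine ⟨s (max i j + 1), Set.mem_range_self _, ?_⟩
  have spanAxAy_le : spanAxAy k ξ (s (max i j)) (s (max i j)) ≤ spanAxAy k ξ (s i) (s j) := by
    simp only [spanAxAy_eq_mul]
    exact mul_le_mul' (ξ.antitone_orbitLeftIdeal hs (le_max_left i j))
      (ξ.antitone_orbitLeftIdeal hs (le_max_right i j))
  exact spanAxAy_le (hs (max i j))

end PartialModuleAlgebra

/-- Every element of an `Hn`-system `N` lies in an `Hm`-system contained in `N`. -/
theorem HnSystem_union_of_HmSystems (ξ : PartialModuleAlgebra k H A) (N : Set A)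
    (hN : HnSystem k ξ N) (a : A) (ha : a ∈ N) :
    ∃ M : Set A, HmSystem k ξ M ∧ a ∈ M ∧ M ⊆ N := by
  choose! f hfN hf using hN.2
  have iterate_mem (n : ℕ) : f^[n] a ∈ N := Set.MapsTo.iterate hfN n ha
  have succ_mem (n : ℕ) : f^[n + 1] a ∈ spanAxAy k ξ (f^[n] a) (f^[n] a) := by
    rw [Function.iterate_succ_apply']
    exact hf _ (iterate_mem n)
  exact ⟨Set.range fun n => f^[n] a, ξ.hmSystem_range succ_mem, ⟨0, rfl⟩,
    Set.range_subset_iff.2 iterate_mem⟩
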